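/- If θ is an angle function for α, then at every point (s, v) with D := v²f(s)² + (sin θ(s) + v·g(s))² ≠ 0, the mean curvature of the C-ruled surface, H = (E·N − 2F·M + G·L)/(2(EG − F²)), equals H = (v²(f′(s)g(s) − f(s)g′(s)) + v·f′(s)·sin θ(s) + f(s)·sin θ(s)·cos θ(s) − v·f(s)·g(s)·cos θ(s))/(2·D^{3/2}). -/

import Mathlib

open RealInnerProductSpace

/-- Cross product on `EuclideanSpace ℝ (Fin 3)`. -/
noncomputable def cross3 (u v : EuclideanSpace ℝ (Fin 3)) : EuclideanSpace ℝ (Fin 3) :=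
  (EuclideanSpace.equiv (Fin 3) ℝ).symm
    (crossProduct ((EuclideanSpace.equiv (Fin 3) ℝ) u) ((EuclideanSpace.equiv (Fin 3) ℝ) v))

/-- Determinant of the 3×3 matrix whose rows are the given vectors. -/
noncomputable def det3 (u v w : EuclideanSpace ℝ (Fin 3)) : ℝ :=
  Matrix.det (Matrix.of ![(EuclideanSpace.equiv (Fin 3) ℝ) u,
    (EuclideanSpace.equiv (Fin 3) ℝ) v, (EuclideanSpace.equiv (Fin 3) ℝ) w])

open scoped ContDiff

theorem ContDiff.cross3 {n : WithTop ℕ∞} {u v : ℝ → EuclideanSpace ℝ (Fin 3)}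
    (hu : ContDiff ℝ n u) (hv : ContDiff ℝ n v) : ContDiff ℝ n (fun s => cross3 (u s) (v s)) := by
  rw [contDiff_euclidean] at *
  intro i
  fin_cases i <;> simp [_root_.cross3, crossProduct] <;>
    exact ((hu _).mul (hv _)).sub ((hu _).mul (hv _))

theorem inner_left_cross3 (u v : EuclideanSpace ℝ (Fin 3)) : ⟪u, cross3 u v⟫ = 0 := by
  simp [cross3, crossProduct, PiLp.inner_apply, Fin.sum_univ_three]
  ring

theorem inner_right_cross3 (u v : EuclideanSpace ℝ (Fin 3)) : ⟪v, cross3 u v⟫ = 0 := by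
  simp [cross3, crossProduct, PiLp.inner_apply, Fin.sum_univ_three]
  ring

theorem inner_cross3_self (u v : EuclideanSpace ℝ (Fin 3)) :
    ⟪cross3 u v, cross3 u v⟫ = ⟪u, u⟫ * ⟪v, v⟫ - ⟪u, v⟫ ^ 2 := by
  simp only [cross3, crossProduct, PiLp.inner_apply, Fin.sum_univ_three]
  simp
  ring

theorem det3_cross3 (u v : EuclideanSpace ℝ (Fin 3)) :
    det3 u v (cross3 u v) = ⟪cross3 u v, cross3 u v⟫ := by
  simp only [det3, cross3, crossProduct, PiLp.inner_apply, Fin.sum_univ_three, Matrix.det_fin_three]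
  simp
  ring

theorem det3_linear_combination (u v w : EuclideanSpace ℝ (Fin 3))
    (a₁ a₂ a₃ b₁ b₂ b₃ c₁ c₂ c₃ : ℝ) :
    det3 (a₁ • u + a₂ • v + a₃ • w) (b₁ • u + b₂ • v + b₃ • w) (c₁ • u + c₂ • v + c₃ • w) =
      (a₁ * (b₂ * c₃ - b₃ * c₂) - a₂ * (b₁ * c₃ - b₃ * c₁) + a₃ * (b₁ * c₂ - b₂ * c₁)) *
        det3 u v w := by
  simp only [det3, Matrix.det_fin_three]
  simp
  ring

theorem orthonormal_cross3 {u v : EuclideanSpace ℝ (Fin 3)} (hu : ⟪u, u⟫ = 1) (hv : ⟪v, v⟫ = 1)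
    (huv : ⟪u, v⟫ = 0) : Orthonormal ℝ ![u, v, cross3 u v] := by
  have hw : ⟪cross3 u v, cross3 u v⟫ = 1 := by rw [inner_cross3_self, hu, hv, huv]; norm_num
  rw [orthonormal_iff_ite]
  intro i j
  fin_cases i <;> fin_cases j <;>
    simp only [Fin.zero_eta, Fin.mk_one, Fin.reduceFinMk, Matrix.cons_val] <;>
    simp [hu, hv, hw, huv, inner_left_cross3, inner_right_cross3, real_inner_comm,
      -inner_self_eq_norm_sq_to_K]

/-- Expansion of a vector in the positively oriented orthonormal frame `u, v, u × v`. -/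
theorem eq_linear_combination_cross3 {u v : EuclideanSpace ℝ (Fin 3)} (hu : ⟪u, u⟫ = 1)
    (hv : ⟪v, v⟫ = 1) (huv : ⟪u, v⟫ = 0) (x : EuclideanSpace ℝ (Fin 3)) :
    x = ⟪u, x⟫ • u + ⟪v, x⟫ • v + ⟪cross3 u v, x⟫ • cross3 u v := by
  have ho := orthonormal_cross3 hu hv huv
  let b := (basisOfOrthonormalOfCardEqFinrank ho (by simp)).toOrthonormalBasis (by simpa using ho)
  have h := b.sum_repr' x
  simpa [b, Fin.sum_univ_three] using h.symm

theorem inner_linear_combination {u v w : EuclideanSpace ℝ (Fin 3)}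
    (ho : Orthonormal ℝ ![u, v, w]) (a₁ a₂ a₃ b₁ b₂ b₃ : ℝ) :
    ⟪a₁ • u + a₂ • v + a₃ • w, b₁ • u + b₂ • v + b₃ • w⟫ = a₁ * b₁ + a₂ * b₂ + a₃ * b₃ := by
  have h := ho.inner_sum ![a₁, a₂, a₃] ![b₁, b₂, b₃] Finset.univ
  simpa [Fin.sum_univ_three] using h

theorem inner_deriv_add_inner_deriv_eq_zero {x y : ℝ → EuclideanSpace ℝ (Fin 3)} {c : ℝ}
    (hx : Differentiable ℝ x) (hy : Differentiable ℝ y) (h : ∀ s, ⟪x s, y s⟫ = c) (s : ℝ) :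
    ⟪x s, deriv y s⟫ + ⟪deriv x s, y s⟫ = 0 := by
  have h₁ := (hx s).hasDerivAt.inner ℝ (hy s).hasDerivAt
  rw [funext h] at h₁
  exact h₁.unique (hasDerivAt_const s c)

/-- The Frenet equations for the normal and the binormal. -/
theorem hasDerivAt_normal_binormal {T N : ℝ → EuclideanSpace ℝ (Fin 3)} {κ : ℝ → ℝ}
    (hT : ContDiff ℝ ∞ T) (hN : ContDiff ℝ ∞ N) (hTT : ∀ s, ⟪T s, T s⟫ = 1)
    (hNN : ∀ s, ⟪N s, N s⟫ = 1) (hTN : ∀ s, ⟪T s, N s⟫ = 0)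
    (hT' : ∀ s, deriv T s = κ s • N s) (s : ℝ) :
    HasDerivAt N
        (-κ s • T s + ⟪deriv N s, cross3 (T s) (N s)⟫ • cross3 (T s) (N s)) s ∧
      HasDerivAt (fun s => cross3 (T s) (N s))
        (-⟪deriv N s, cross3 (T s) (N s)⟫ • N s) s := by
  have hTd : Differentiable ℝ T := hT.differentiable (by simp)
  have hNd : Differentiable ℝ N := hN.differentiable (by simp)
  have hBd : Differentiable ℝ (fun s => cross3 (T s) (N s)) :=
    (hT.cross3 hN).differentiable (by simp)
  have hBB : ∀ s, ⟪cross3 (T s) (N s), cross3 (T s) (N s)⟫ = 1 := fun s => by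
    rw [inner_cross3_self, hTT, hNN, hTN]; norm_num
  have e := eq_linear_combination_cross3 (hTT s) (hNN s) (hTN s)
  have h₁ := inner_deriv_add_inner_deriv_eq_zero hTd hNd hTN s
  have h₂ := inner_deriv_add_inner_deriv_eq_zero hNd hNd hNN s
  have h₃ := inner_deriv_add_inner_deriv_eq_zero hTd hBd (fun s => inner_left_cross3 (T s) (N s)) s
  have h₄ := inner_deriv_add_inner_deriv_eq_zero hNd hBd (fun s => inner_right_cross3 (T s) (N s)) s
  have h₅ := inner_deriv_add_inner_deriv_eq_zero hBd hBd hBB s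
  rw [real_inner_comm] at h₂ h₅
  rw [hT', real_inner_smul_left, hNN] at h₁
  rw [hT', real_inner_smul_left, inner_right_cross3] at h₃
  constructor
  · refine (hNd s).hasDerivAt.congr_deriv ?_
    rw [real_inner_comm (cross3 (T s) (N s))]
    refine (e (deriv N s)).trans ?_
    rw [show ⟪T s, deriv N s⟫ = -κ s by linarith,
      show ⟪N s, deriv N s⟫ = 0 by rw [real_inner_comm]; linarith, zero_smul, add_zero]
  · refine (hBd s).hasDerivAt.congr_deriv ((e _).trans ?_)
    rw [show ⟪T s, deriv (fun s => cross3 (T s) (N s)) s⟫ = 0 by linarith,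
      show ⟪N s, deriv (fun s => cross3 (T s) (N s)) s⟫ = -⟪deriv N s, cross3 (T s) (N s)⟫ by
        linarith,
      show ⟪cross3 (T s) (N s), deriv (fun s => cross3 (T s) (N s)) s⟫ = 0 by
        rw [real_inner_comm]; linarith]
    simp

theorem stmt_13
    (α : ℝ → EuclideanSpace ℝ (Fin 3))
    (hα : ContDiff ℝ (⊤ : ℕ∞) α)
    (hunit : ∀ s, ‖deriv α s‖ = 1)
    (T : ℝ → EuclideanSpace ℝ (Fin 3)) (hT : ∀ s, T s = deriv α s)
    (κ : ℝ → ℝ) (hκ : ∀ s, κ s = ‖deriv (deriv α) s‖) (hκpos : ∀ s, 0 < κ s)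
    (N : ℝ → EuclideanSpace ℝ (Fin 3)) (hN : ∀ s, N s = (κ s)⁻¹ • deriv (deriv α) s)
    (B : ℝ → EuclideanSpace ℝ (Fin 3)) (hB : ∀ s, B s = cross3 (T s) (N s))
    (τ : ℝ → ℝ) (hτ : ∀ s, τ s = ⟪deriv N s, B s⟫)
    (f : ℝ → ℝ) (hf : ∀ s, f s = Real.sqrt (κ s ^ 2 + τ s ^ 2))
    (g : ℝ → ℝ) (hg : ∀ s, g s = κ s ^ 2 / (κ s ^ 2 + τ s ^ 2) * deriv (fun u => τ u / κ u) s)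
    (C : ℝ → EuclideanSpace ℝ (Fin 3))
    (hC : ∀ s, C s = (Real.sqrt (κ s ^ 2 + τ s ^ 2))⁻¹ • ((-κ s) • T s + τ s • B s))
    (W : ℝ → EuclideanSpace ℝ (Fin 3))
    (hW : ∀ s, W s = (Real.sqrt (κ s ^ 2 + τ s ^ 2))⁻¹ • (τ s • T s + κ s • B s))
    (θ : ℝ → ℝ) (hθdiff : Differentiable ℝ θ)
    (hθderiv : ∀ s, deriv θ s = g s)
    (hθκ : ∀ s, κ s = f s * Real.cos (θ s))
    (hθτ : ∀ s, τ s = f s * Real.sin (θ s))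
    (φs φv : ℝ → ℝ → EuclideanSpace ℝ (Fin 3))
    (hφs : ∀ s v, φs s v = deriv (fun u => α u + v • C u) s)
    (hφv : ∀ s v, φv s v = deriv (fun w => α s + w • C s) v)
    (φss φsv φvv : ℝ → ℝ → EuclideanSpace ℝ (Fin 3))
    (hφss : ∀ s v, φss s v = deriv (fun u => φs u v) s)
    (hφsv : ∀ s v, φsv s v = deriv (fun u => φv u v) s)
    (hφvv : ∀ s v, φvv s v = deriv (fun w => φv s w) v)
    (EE FF GG LL MM NN : ℝ → ℝ → ℝ)
    (hEE : ∀ s v, EE s v = ‖φs s v‖ ^ 2)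
    (hFF : ∀ s v, FF s v = ⟪φs s v, φv s v⟫)
    (hGG : ∀ s v, GG s v = ‖φv s v‖ ^ 2)
    (hLL : ∀ s v, LL s v =
      det3 (φs s v) (φv s v) (φss s v) / Real.sqrt (EE s v * GG s v - FF s v ^ 2))
    (hMM : ∀ s v, MM s v =
      det3 (φs s v) (φv s v) (φsv s v) / Real.sqrt (EE s v * GG s v - FF s v ^ 2))
    (hNN : ∀ s v, NN s v =
      det3 (φs s v) (φv s v) (φvv s v) / Real.sqrt (EE s v * GG s v - FF s v ^ 2)) :
    ∀ (s v : ℝ),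
      v ^ 2 * f s ^ 2 + (Real.sin (θ s) + v * g s) ^ 2 ≠ 0 →
      (EE s v * NN s v - 2 * FF s v * MM s v + GG s v * LL s v) /
          (2 * (EE s v * GG s v - FF s v ^ 2)) =
        (v ^ 2 * (deriv f s * g s - f s * deriv g s) + v * deriv f s * Real.sin (θ s) +
            f s * Real.sin (θ s) * Real.cos (θ s) - v * f s * g s * Real.cos (θ s)) /
          (2 * Real.sqrt (v ^ 2 * f s ^ 2 + (Real.sin (θ s) + v * g s) ^ 2) ^ 3) := by
  have hTe : T = deriv α := funext hT
  have hTc : ContDiff ℝ ∞ T := hTe ▸ (contDiff_infty_iff_deriv.1 hα).2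
  have hT'c : ContDiff ℝ ∞ (deriv (deriv α)) := (contDiff_infty_iff_deriv.1 (hTe ▸ hTc)).2
  have hκ0 : ∀ s, κ s ≠ 0 := fun s => (hκpos s).ne'
  have hκc : ContDiff ℝ ∞ κ := by
    rw [funext hκ]
    exact hT'c.norm ℝ fun s h => hκ0 s (by rw [hκ, h, norm_zero])
  have hNc : ContDiff ℝ ∞ N := by
    rw [funext hN]
    exact (hκc.inv hκ0).smul hT'c
  have hT' : ∀ s, deriv T s = κ s • N s := fun s => by
    rw [hN, smul_inv_smul₀ (hκ0 s), hTe]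
  have hTT : ∀ s, ⟪T s, T s⟫ = 1 := fun s => by
    rw [real_inner_self_eq_norm_sq, hT, hunit, one_pow]
  have hNN' : ∀ s, ⟪N s, N s⟫ = 1 := fun s => by
    rw [real_inner_self_eq_norm_sq, hN, norm_smul, ← hκ, norm_inv, Real.norm_of_nonneg (hκpos s).le,
      inv_mul_cancel₀ (hκ0 s), one_pow]
  have hTd : Differentiable ℝ T := hTc.differentiable (by simp)
  have hTN : ∀ s, ⟪T s, N s⟫ = 0 := fun s => by
    have h := inner_deriv_add_inner_deriv_eq_zero hTd hTd hTT s
    rw [real_inner_comm, hT', real_inner_smul_left, real_inner_comm] at h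
    have : κ s * ⟪T s, N s⟫ = 0 := by linarith
    exact (mul_eq_zero.1 this).resolve_left (hκ0 s)
  have hBe : B = fun s => cross3 (T s) (N s) := funext hB
  have hBc : ContDiff ℝ ∞ B := hBe ▸ hTc.cross3 hNc
  have hτc : ContDiff ℝ ∞ τ := by
    rw [funext hτ]
    exact (contDiff_infty_iff_deriv.1 hNc).2.inner ℝ hBc
  have hpos : ∀ s, 0 < κ s ^ 2 + τ s ^ 2 := fun s => by have := hκpos s; positivity
  have hfc : ContDiff ℝ ∞ f := by
    rw [funext hf]
    exact ((hκc.pow 2).add (hτc.pow 2)).sqrt fun s => (hpos s).ne'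
  have hgc : ContDiff ℝ ∞ g := by
    rw [funext hg]
    exact ((hκc.pow 2).div ((hκc.pow 2).add (hτc.pow 2)) fun s => (hpos s).ne').mul
      (contDiff_infty_iff_deriv.1 (hτc.div hκc hκ0)).2
  have hf0 : ∀ s, f s ≠ 0 := fun s => by rw [hf]; exact (Real.sqrt_pos.2 (hpos s)).ne'
  have hTD : ∀ s, HasDerivAt T (κ s • N s) s := fun s => hT' s ▸ (hTd s).hasDerivAt
  have hND : ∀ s, HasDerivAt N (-κ s • T s + τ s • B s) s := fun s => by
    rw [hτ, hB]
    exact (hasDerivAt_normal_binormal hTc hNc hTT hNN' hTN hT' s).1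
  have hBD : ∀ s, HasDerivAt B (-τ s • N s) s := fun s => by
    rw [hτ, hB, hBe]
    exact (hasDerivAt_normal_binormal hTc hNc hTT hNN' hTN hT' s).2
  have hαD : ∀ s, HasDerivAt α (T s) s := fun s =>
    hT s ▸ (hα.differentiable (by simp) s).hasDerivAt
  have hfD : ∀ s, HasDerivAt f (deriv f s) s := fun s =>
    (hfc.differentiable (by simp) s).hasDerivAt
  have hgD : ∀ s, HasDerivAt g (deriv g s) s := fun s =>
    (hgc.differentiable (by simp) s).hasDerivAt
  have hθD : ∀ s, HasDerivAt θ (g s) s := fun s => hθderiv s ▸ (hθdiff s).hasDerivAt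
  have hCe : ∀ s, C s = -Real.cos (θ s) • T s + (0 : ℝ) • N s + Real.sin (θ s) • B s := fun s => by
    rw [hC, ← hf, smul_add, smul_smul, smul_smul, hθκ, hθτ]
    congr 1
    · rw [zero_smul, add_zero]
      congr 1
      field_simp [hf0 s]
    · congr 1
      field_simp [hf0 s]
  have hCD : ∀ s, HasDerivAt C ((g s * Real.sin (θ s)) • T s + (-f s) • N s +
      (g s * Real.cos (θ s)) • B s) s := fun s => by
    have h := ((hθD s).cos.neg.smul (hTD s)).add ((hθD s).sin.smul (hBD s))
    rw [show C = fun s => -Real.cos (θ s) • T s + Real.sin (θ s) • B s from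
      funext fun s => by rw [hCe, zero_smul, add_zero]]
    refine h.congr_deriv ?_
    simp only [Pi.neg_apply]
    rw [hθκ, hθτ]
    linear_combination (norm := module) (-f s * Real.sin_sq_add_cos_sq (θ s)) • N s
  have hCDD : ∀ s, HasDerivAt
      (fun s => (g s * Real.sin (θ s)) • T s + (-f s) • N s + (g s * Real.cos (θ s)) • B s)
      ((deriv g s * Real.sin (θ s) + g s ^ 2 * Real.cos (θ s) + f s * κ s) • T s +
        (-deriv f s) • N s +
        (deriv g s * Real.cos (θ s) - g s ^ 2 * Real.sin (θ s) - f s * τ s) • B s) s := fun s => by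
    have h := ((((hgD s).mul (hθD s).sin).smul (hTD s)).add ((hfD s).neg.smul (hND s))).add
      (((hgD s).mul (hθD s).cos).smul (hBD s))
    refine h.congr_deriv ?_
    simp only [Pi.mul_apply, Pi.neg_apply]
    rw [hθκ, hθτ]
    module
  intro s v hD
  have es : ∀ s, φs s v = (1 + v * (g s * Real.sin (θ s))) • T s + (-(v * f s)) • N s +
      (v * (g s * Real.cos (θ s))) • B s := fun s => by
    rw [hφs]
    refine ((hαD s).add ((hCD s).const_smul v)).deriv.trans ?_
    module
  have ev : ∀ s v, φv s v = C s := fun s v => by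
    rw [hφv]
    exact (((hasDerivAt_id v).smul_const (C s)).const_add (α s)).deriv.trans (one_smul _ _)
  have ess : φss s v =
      (v * (deriv g s * Real.sin (θ s) + g s ^ 2 * Real.cos (θ s) + f s * κ s)) • T s +
        (κ s - v * deriv f s) • N s +
        (v * (deriv g s * Real.cos (θ s) - g s ^ 2 * Real.sin (θ s) - f s * τ s)) • B s := by
    have h := (hTD s).add ((hCDD s).const_smul v)
    rw [hφss, show (fun u => φs u v) = T + v • fun s => (g s * Real.sin (θ s)) • T s +
      (-f s) • N s + (g s * Real.cos (θ s)) • B s from funext fun s => by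
        rw [es]; simp only [Pi.add_apply, Pi.smul_apply]; module, h.deriv]
    module
  have esv : φsv s v = (g s * Real.sin (θ s)) • T s + (-f s) • N s +
      (g s * Real.cos (θ s)) • B s := by
    rw [hφsv, funext fun u => ev u v, (hCD s).deriv]
  have evv : φvv s v = (0 : ℝ) • T s + (0 : ℝ) • N s + (0 : ℝ) • B s := by
    rw [hφvv, funext fun w => ev s w, deriv_const]
    simp
  have ho : Orthonormal ℝ ![T s, N s, B s] := hB s ▸ orthonormal_cross3 (hTT s) (hNN' s) (hTN s)
  have hdet : det3 (T s) (N s) (B s) = 1 := by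
    rw [hB, det3_cross3, inner_cross3_self, hTT, hNN', hTN]
    norm_num
  have hsc := Real.sin_sq_add_cos_sq (θ s)
  have hE : EE s v = v ^ 2 * f s ^ 2 + (Real.sin (θ s) + v * g s) ^ 2 + Real.cos (θ s) ^ 2 := by
    rw [hEE, es, ← real_inner_self_eq_norm_sq, inner_linear_combination ho]
    linear_combination (v ^ 2 * g s ^ 2 - 1) * hsc
  have hF : FF s v = -Real.cos (θ s) := by
    rw [hFF, es, ev, hCe, inner_linear_combination ho]
    ring
  have hG : GG s v = 1 := by
    rw [hGG, ev, hCe, ← real_inner_self_eq_norm_sq, inner_linear_combination ho]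
    linear_combination hsc
  have hEG : EE s v * GG s v - FF s v ^ 2 =
      v ^ 2 * f s ^ 2 + (Real.sin (θ s) + v * g s) ^ 2 := by
    rw [hE, hF, hG]
    ring
  rw [hNN, hMM, hLL, hEG, es, ev, ess, esv, evv, hCe, det3_linear_combination,
    det3_linear_combination, det3_linear_combination, hdet, hF, hG, hθκ s, hθτ s]
  set D := v ^ 2 * f s ^ 2 + (Real.sin (θ s) + v * g s) ^ 2
  have hD0 : 0 < D := lt_of_le_of_ne (by positivity) hD.symm
  have hq : √D ^ 2 = D := Real.sq_sqrt hD0.le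
  have hq0 : √D ≠ 0 := (Real.sqrt_pos.2 hD0).ne'
  generalize √D = q at hq hq0
  rw [← hq]
  field_simp
  linear_combination (v ^ 2 * (g s * deriv f s - f s * deriv g s) -
    v * f s * g s * Real.cos (θ s)) * hsc
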